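/- arXiv:math/0607050 — 2 statements merged into one kernel-verified Lean document; each statement's English description precedes it below -/
import Mathlib

section
/- In the Lyapunov–Perron setting, assume ρ := L·(1/(η+β) − 1/(α+η)) < 1. Then for every ξ ∈ H_c the map v ↦ N(v, ξ) has a unique fixed point v*(·; ξ) ∈ C_η⁻, and the map h : H_c → H_s defined by letting h(ξ) be the H_s-component of v*(0; ξ) satisfies h(0) = 0 and ‖h(ξ) − h(ξ̄)‖ ≤ [L/((β+η)(1−ρ))]·‖ξ − ξ̄‖ for all ξ, ξ̄ ∈ H_c. (The graph of h is the Lipschitz invariant manifold.) -/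
open MeasureTheory Set

theorem aux_joint {E : Type*} [NormedAddCommGroup E] [NormedSpace ℝ E]
    (T : ℝ → E →L[ℝ] E) (hT : ∀ r x, ‖T r x‖ ≤ ‖x‖) (hc : ∀ x, Continuous fun r => T r x) :
    Continuous fun p : ℝ × E => T p.1 p.2 := by
  rw [continuous_iff_continuousAt]
  rintro ⟨r0, x0⟩
  unfold ContinuousAt
  rw [tendsto_iff_norm_sub_tendsto_zero]
  have h1 : Filter.Tendsto (fun p : ℝ × E => ‖p.2 - x0‖ + ‖T p.1 x0 - T r0 x0‖)
      (nhds (r0, x0)) (nhds 0) := by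
    have : Continuous (fun p : ℝ × E => ‖p.2 - x0‖ + ‖T p.1 x0 - T r0 x0‖) := by
      have := (hc x0).comp (continuous_fst (X := ℝ) (Y := E))
      have h2 : Continuous (fun p : ℝ × E => T p.1 x0) := this
      fun_prop
    have h := this.tendsto (r0, x0)
    simpa using h
  refine squeeze_zero (fun _ => norm_nonneg _) (fun p => ?_) h1
  have : T p.1 p.2 - T r0 x0 = T p.1 (p.2 - x0) + (T p.1 x0 - T r0 x0) := by
    rw [map_sub]; abel
  rw [this]
  exact (norm_add_le _ _).trans (by gcongr; exact hT _ _)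

section B
variable {F : Type*} [NormedAddCommGroup F] [NormedSpace ℝ F]

theorem aux_B_joint (B : ℝ → F →L[ℝ] F) (b : ℝ) (hb : 0 < b)
    (hBc : ∀ x, ContinuousOn (fun t => B t x) (Ici 0))
    (hB : ∀ t, 0 ≤ t → ∀ x, ‖B t x‖ ≤ Real.exp (-b * t) * ‖x‖) :
    Continuous fun p : ℝ × F => B (max p.1 0) p.2 := by
  refine aux_joint (fun r => B (max r 0)) (fun r x => ?_) (fun x => ?_)
  · refine (hB _ (le_max_right _ _) x).trans ?_
    have : Real.exp (-b * max r 0) ≤ 1 := by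
      rw [Real.exp_le_one_iff]
      nlinarith [le_max_right r 0]
    nlinarith [norm_nonneg x]
  · exact (hBc x).comp_continuous (by fun_prop) (fun r => mem_Ici.2 (le_max_right _ _))

theorem aux_B_meas (B : ℝ → F →L[ℝ] F) (b : ℝ) (hb : 0 < b)
    (hBc : ∀ x, ContinuousOn (fun t => B t x) (Ici 0))
    (hB : ∀ t, 0 ≤ t → ∀ x, ‖B t x‖ ≤ Real.exp (-b * t) * ‖x‖)
    (f : ℝ → F) (hf : Continuous f) (t : ℝ) :
    ContinuousOn (fun r => B r (f (t - r))) (Ioi 0) := by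
  have h := (aux_B_joint B b hb hBc hB).comp
    (f := fun r : ℝ => ((r, f (t - r)) : ℝ × F)) (by fun_prop)
  refine h.continuousOn.congr (fun r hr => ?_)
  simp [max_eq_left (le_of_lt (mem_Ioi.1 hr))]

theorem aux_B_int (B : ℝ → F →L[ℝ] F) (b : ℝ) (hb : 0 < b)
    (hBc : ∀ x, ContinuousOn (fun t => B t x) (Ici 0))
    (hB : ∀ t, 0 ≤ t → ∀ x, ‖B t x‖ ≤ Real.exp (-b * t) * ‖x‖)
    (f : ℝ → F) (hf : Continuous f) (C : ℝ) (hC : ∀ t, ‖f t‖ ≤ C) (t : ℝ) :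
    IntegrableOn (fun r => B r (f (t - r))) (Ioi 0) := by
  have h1 : IntegrableOn (fun r => Real.exp (-b * r) * C) (Ioi 0) :=
    (exp_neg_integrableOn_Ioi 0 hb).mul_const C
  refine Integrable.mono' h1 ((aux_B_meas B b hb hBc hB f hf t).aestronglyMeasurable
    measurableSet_Ioi) ?_
  filter_upwards [ae_restrict_mem measurableSet_Ioi] with r hr
  exact (hB r (le_of_lt hr) _).trans (by gcongr; exact hC _)

theorem aux_B_bd (B : ℝ → F →L[ℝ] F) (b : ℝ) (hb : 0 < b)
    (hB : ∀ t, 0 ≤ t → ∀ x, ‖B t x‖ ≤ Real.exp (-b * t) * ‖x‖)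
    (f : ℝ → F) (C : ℝ) (hC : ∀ t, ‖f t‖ ≤ C) (t : ℝ) :
    ‖∫ r in Ioi 0, B r (f (t - r))‖ ≤ C * (1 / b) := by
  have h1 : IntegrableOn (fun r => Real.exp (-b * r) * C) (Ioi 0) :=
    (exp_neg_integrableOn_Ioi 0 hb).mul_const C
  have h2 : ∫ r in Ioi (0:ℝ), Real.exp (-b * r) * C = C * (1 / b) := by
    rw [integral_mul_const, integral_exp_mul_Ioi (by linarith)]
    simp [mul_comm]
  rw [← h2]
  refine norm_integral_le_of_norm_le h1 ?_
  filter_upwards [ae_restrict_mem measurableSet_Ioi] with r hr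
  exact (hB r (le_of_lt hr) _).trans (by gcongr; exact hC _)

theorem aux_B_cont (B : ℝ → F →L[ℝ] F) (b : ℝ) (hb : 0 < b)
    (hBc : ∀ x, ContinuousOn (fun t => B t x) (Ici 0))
    (hB : ∀ t, 0 ≤ t → ∀ x, ‖B t x‖ ≤ Real.exp (-b * t) * ‖x‖)
    (f : ℝ → F) (hf : Continuous f) (C : ℝ) (hC : ∀ t, ‖f t‖ ≤ C) :
    Continuous fun t => ∫ r in Ioi 0, B r (f (t - r)) := by
  have h1 : IntegrableOn (fun r => Real.exp (-b * r) * C) (Ioi 0) :=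
    (exp_neg_integrableOn_Ioi 0 hb).mul_const C
  refine continuous_of_dominated (bound := fun r => Real.exp (-b * r) * C) (fun t =>
    (aux_B_meas B b hb hBc hB f hf t).aestronglyMeasurable measurableSet_Ioi) (fun t => ?_) h1 ?_
  · filter_upwards [ae_restrict_mem measurableSet_Ioi] with r hr
    exact (hB r (le_of_lt hr) _).trans (by gcongr; exact hC _)
  · filter_upwards with r
    exact (B r).continuous.comp (by fun_prop)

theorem aux_A_joint (A : ℝ → F →L[ℝ] F) (a : ℝ) (ha : 0 < a)
    (hAc : ∀ x, Continuous (fun t => A t x))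
    (hA : ∀ t, t ≤ 0 → ∀ x, ‖A t x‖ ≤ Real.exp (a * t) * ‖x‖) :
    Continuous fun p : ℝ × F => A (min p.1 0) p.2 := by
  refine aux_joint (fun r => A (min r 0)) (fun r x => ?_) (fun x => ?_)
  · refine (hA _ (min_le_right _ _) x).trans ?_
    have : Real.exp (a * min r 0) ≤ 1 := by
      rw [Real.exp_le_one_iff]
      nlinarith [min_le_right r 0]
    nlinarith [norm_nonneg x]
  · exact (hAc x).comp (by fun_prop : Continuous fun r : ℝ => min r 0)

theorem aux_A_eq (A : ℝ → F →L[ℝ] F) (f : ℝ → F) (t : ℝ) (ht : t ≤ 0) :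
    ∫ r in (0:ℝ)..t, A r (f (t - r)) = ∫ r in (0:ℝ)..t, A (min r 0) (f (t - r)) := by
  refine intervalIntegral.integral_congr (fun r hr => ?_)
  rw [uIcc_of_ge ht] at hr
  simp [min_eq_left hr.2]

theorem aux_A_cont (A : ℝ → F →L[ℝ] F) (a : ℝ) (ha : 0 < a)
    (hAc : ∀ x, Continuous (fun t => A t x))
    (hA : ∀ t, t ≤ 0 → ∀ x, ‖A t x‖ ≤ Real.exp (a * t) * ‖x‖)
    (f : ℝ → F) (hf : Continuous f) :
    Continuous fun t => ∫ r in (0:ℝ)..(min t 0), A r (f (min t 0 - r)) := by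
  have h1 : (fun t => ∫ r in (0:ℝ)..(min t 0), A r (f (min t 0 - r))) =
    fun t => ∫ r in (0:ℝ)..(min t 0), A (min r 0) (f (min t 0 - r)) :=
    funext fun t => aux_A_eq A f _ (min_le_right _ _)
  rw [h1]
  refine intervalIntegral.continuous_parametric_intervalIntegral_of_continuous ?_ (by fun_prop)
  exact (aux_A_joint A a ha hAc hA).comp
    (f := fun p : ℝ × ℝ => ((p.2, f (min p.1 0 - p.2)) : ℝ × F)) (by fun_prop)

theorem aux_A_int (A : ℝ → F →L[ℝ] F) (a : ℝ) (ha : 0 < a)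
    (hAc : ∀ x, Continuous (fun t => A t x))
    (hA : ∀ t, t ≤ 0 → ∀ x, ‖A t x‖ ≤ Real.exp (a * t) * ‖x‖)
    (f : ℝ → F) (hf : Continuous f) (t : ℝ) (ht : t ≤ 0) :
    IntervalIntegrable (fun r => A r (f (t - r))) volume 0 t := by
  have h := (aux_A_joint A a ha hAc hA).comp
    (f := fun r : ℝ => ((r, f (t - r)) : ℝ × F)) (by fun_prop)
  apply ContinuousOn.intervalIntegrable
  refine h.continuousOn.congr (fun r hr => ?_)
  rw [uIcc_of_ge ht] at hr
  simp [min_eq_left hr.2]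

theorem aux_A_bd (A : ℝ → F →L[ℝ] F) (a : ℝ) (ha : 0 < a)
    (hA : ∀ t, t ≤ 0 → ∀ x, ‖A t x‖ ≤ Real.exp (a * t) * ‖x‖)
    (f : ℝ → F) (C : ℝ) (hC : ∀ t, ‖f t‖ ≤ C) (t : ℝ) (ht : t ≤ 0) :
    ‖∫ r in (0:ℝ)..t, A r (f (t - r))‖ ≤ C * (1 / a) := by
  have hC0 : 0 ≤ C := (norm_nonneg _).trans (hC 0)
  rw [intervalIntegral.integral_symm, norm_neg]
  have h1 : ‖∫ r in t..0, A r (f (t - r))‖ ≤ ∫ r in t..0, Real.exp (a * r) * C := by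
    refine intervalIntegral.norm_integral_le_of_norm_le ht ?_
      (Continuous.intervalIntegrable (by fun_prop) _ _)
    filter_upwards with r hr
    exact (hA r hr.2 _).trans (by gcongr; exact hC _)
  refine h1.trans ?_
  have h2 : ∫ r in t..0, Real.exp (a * r) = a⁻¹ * (1 - Real.exp (a * t)) := by
    rw [intervalIntegral.integral_comp_mul_left (fun x => Real.exp x) ha.ne', integral_exp]
    simp
  rw [intervalIntegral.integral_mul_const, h2, mul_comm, one_div]
  have : 0 < a⁻¹ := by positivity
  have h3 := Real.exp_pos (a * t)
  gcongr
  nlinarith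

end B

theorem aux_norm_le {E F : Type*} [NormedAddCommGroup E] [NormedAddCommGroup F]
    (x : WithLp 2 (E × F)) : ‖x‖ ≤ ‖x.fst‖ + ‖x.snd‖ := by
  rw [WithLp.prod_norm_eq_of_L2]
  apply Real.sqrt_le_iff.2
  constructor
  · positivity
  · nlinarith [norm_nonneg x.fst, norm_nonneg x.snd]

open scoped BoundedContinuousFunction

theorem aux_core {E F : Type*} [NormedAddCommGroup E] [NormedSpace ℝ E] [CompleteSpace E]
    [NormedAddCommGroup F] [NormedSpace ℝ F] [CompleteSpace F]
    (A : ℝ → E →L[ℝ] E) (a : ℝ) (ha : 0 < a)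
    (hAc : ∀ x, Continuous (fun t => A t x))
    (hA : ∀ t, t ≤ 0 → ∀ x, ‖A t x‖ ≤ Real.exp (a * t) * ‖x‖)
    (B : ℝ → F →L[ℝ] F) (b : ℝ) (hb : 0 < b)
    (hBc : ∀ x, ContinuousOn (fun t => B t x) (Ici 0))
    (hB : ∀ t, 0 ≤ t → ∀ x, ‖B t x‖ ≤ Real.exp (-b * t) * ‖x‖)
    (L : ℝ) (hL : 0 ≤ L)
    (gc : ℝ → WithLp 2 (E × F) → E) (gs : ℝ → WithLp 2 (E × F) → F)
    (hgcCont : Continuous fun p : ℝ × WithLp 2 (E × F) => gc p.1 p.2)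
    (hgsCont : Continuous fun p : ℝ × WithLp 2 (E × F) => gs p.1 p.2)
    (hgc0 : ∀ t : ℝ, gc t 0 = 0) (hgs0 : ∀ t : ℝ, gs t 0 = 0)
    (hgcLip : ∀ (t : ℝ) (x y : WithLp 2 (E × F)), ‖gc t x - gc t y‖ ≤ L * ‖x - y‖)
    (hgsLip : ∀ (t : ℝ) (x y : WithLp 2 (E × F)), ‖gs t x - gs t y‖ ≤ L * ‖x - y‖)
    (Ψ : E → (ℝ → WithLp 2 (E × F)) → ℝ → WithLp 2 (E × F))
    (hΨ : ∀ ξ u t, Ψ ξ u t = WithLp.toLp 2 (A t ξ + ∫ r in (0:ℝ)..t, A r (gc (t - r) (u (t - r))),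
      ∫ r in Ioi 0, B r (gs (t - r) (u (t - r)))))
    (ρ : ℝ) (hρdef : ρ = L * (1 / b + 1 / a)) (hρ : ρ < 1) :
    ∃ us : E → (ℝ →ᵇ WithLp 2 (E × F)),
      (∀ ξ t, Ψ ξ (us ξ) (min t 0) = us ξ t) ∧
      (∀ ξ (u : ℝ →ᵇ WithLp 2 (E × F)), (∀ t, Ψ ξ u (min t 0) = u t) → u = us ξ) ∧
      us 0 = 0 ∧
      (∀ ξ ξ', ‖(us ξ 0).snd - (us ξ' 0).snd‖ ≤ L / (b * (1 - ρ)) * ‖ξ - ξ'‖) := by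
  have hcc : ∀ u : ℝ →ᵇ WithLp 2 (E × F), Continuous fun t => gc t (u t) := fun u =>
    hgcCont.comp (f := fun t => (t, u t)) (by fun_prop)
  have hcs : ∀ u : ℝ →ᵇ WithLp 2 (E × F), Continuous fun t => gs t (u t) := fun u =>
    hgsCont.comp (f := fun t => (t, u t)) (by fun_prop)
  have hdc : ∀ (u w : ℝ →ᵇ WithLp 2 (E × F)) t, ‖gc t (u t) - gc t (w t)‖ ≤ L * ‖u - w‖ :=
    fun u w t => (hgcLip _ _ _).trans (by gcongr; exact (u - w).norm_coe_le_norm t)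
  have hds : ∀ (u w : ℝ →ᵇ WithLp 2 (E × F)) t, ‖gs t (u t) - gs t (w t)‖ ≤ L * ‖u - w‖ :=
    fun u w t => (hgsLip _ _ _).trans (by gcongr; exact (u - w).norm_coe_le_norm t)
  have hbs : ∀ (u : ℝ →ᵇ WithLp 2 (E × F)) t, ‖gs t (u t)‖ ≤ L * ‖u‖ := by
    intro u t
    simpa [hgs0] using hds u 0 t
  have hΨ0 : ∀ t, Ψ 0 (0 : ℝ →ᵇ WithLp 2 (E × F)) t = 0 := by
    intro t; rw [hΨ]; simp [hgc0, hgs0]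
  -- stable difference
  have hS : ∀ ξ ξ' (u w : ℝ →ᵇ WithLp 2 (E × F)) t,
      ‖(Ψ ξ u t).snd - (Ψ ξ' w t).snd‖ ≤ L * ‖u - w‖ * (1 / b) := by
    intro ξ ξ' u w t
    rw [hΨ, hΨ]
    change ‖(∫ r in Ioi 0, B r (gs (t - r) (u (t - r)))) -
      ∫ r in Ioi 0, B r (gs (t - r) (w (t - r)))‖ ≤ _
    rw [← integral_sub (aux_B_int B b hb hBc hB _ (hcs u) _ (hbs u) t)
      (aux_B_int B b hb hBc hB _ (hcs w) _ (hbs w) t)]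
    simp only [← map_sub]
    exact aux_B_bd B b hb hB (fun t => gs t (u t) - gs t (w t)) _ (hds u w) t
  have hCd : ∀ ξ ξ' (u w : ℝ →ᵇ WithLp 2 (E × F)) t, t ≤ 0 →
      ‖(Ψ ξ u t).fst - (Ψ ξ' w t).fst‖ ≤ ‖ξ - ξ'‖ + L * ‖u - w‖ * (1 / a) := by
    intro ξ ξ' u w t ht
    rw [hΨ, hΨ]
    change ‖(A t ξ + ∫ r in (0:ℝ)..t, A r (gc (t - r) (u (t - r)))) -
      (A t ξ' + ∫ r in (0:ℝ)..t, A r (gc (t - r) (w (t - r))))‖ ≤ _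
    rw [add_sub_add_comm, ← intervalIntegral.integral_sub
      (aux_A_int A a ha hAc hA _ (hcc u) t ht) (aux_A_int A a ha hAc hA _ (hcc w) t ht)]
    simp only [← map_sub]
    refine (norm_add_le _ _).trans (add_le_add ?_
      (aux_A_bd A a ha hA (fun t => gc t (u t) - gc t (w t)) _ (hdc u w) t ht))
    refine (hA t ht _).trans ?_
    have : Real.exp (a * t) ≤ 1 := by
      rw [Real.exp_le_one_iff]
      nlinarith
    nlinarith [norm_nonneg (ξ - ξ')]
  have hD : ∀ ξ ξ' (u w : ℝ →ᵇ WithLp 2 (E × F)) t, t ≤ 0 →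
      ‖Ψ ξ u t - Ψ ξ' w t‖ ≤ ‖ξ - ξ'‖ + ρ * ‖u - w‖ := by
    intro ξ ξ' u w t ht
    refine (aux_norm_le _).trans ?_
    have h1 := hS ξ ξ' u w t
    have h2 := hCd ξ ξ' u w t ht
    rw [WithLp.sub_fst, WithLp.sub_snd]
    rw [hρdef]
    linarith
  have hcont : ∀ ξ (u : ℝ →ᵇ WithLp 2 (E × F)), Continuous fun t => Ψ ξ u (min t 0) := by
    intro ξ u
    simp only [hΨ]
    have h1 := aux_A_cont A a ha hAc hA _ (hcc u)
    have h2 := (aux_B_cont B b hb hBc hB _ (hcs u) _ (hbs u)).comp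
      (by fun_prop : Continuous fun t : ℝ => min t 0)
    have h3 := (hAc ξ).comp (by fun_prop : Continuous fun t : ℝ => min t 0)
    exact (WithLp.prod_continuous_toLp 2 E F).comp ((h3.add h1).prodMk h2)
  let Φ : E → (ℝ →ᵇ WithLp 2 (E × F)) → (ℝ →ᵇ WithLp 2 (E × F)) := fun ξ u =>
    BoundedContinuousFunction.ofNormedAddCommGroup (fun t => Ψ ξ u (min t 0)) (hcont ξ u)
      (‖ξ‖ + ρ * ‖u‖) (fun t => by
        have := hD ξ 0 u 0 (min t 0) (min_le_right _ _)
        rw [hΨ0] at this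
        simpa using this)
  have hΦ : ∀ ξ u t, Φ ξ u t = Ψ ξ u (min t 0) := fun _ _ _ => rfl
  have hρ0 : 0 ≤ ρ := by rw [hρdef]; positivity
  have hΦd : ∀ ξ ξ' u w, ‖Φ ξ u - Φ ξ' w‖ ≤ ‖ξ - ξ'‖ + ρ * ‖u - w‖ := by
    intro ξ ξ' u w
    refine (BoundedContinuousFunction.norm_le (by positivity)).2 (fun t => ?_)
    exact hD ξ ξ' u w (min t 0) (min_le_right _ _)
  have hcontr : ∀ ξ, ContractingWith ⟨ρ, hρ0⟩ (Φ ξ) := by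
    intro ξ
    refine ⟨by exact_mod_cast hρ, LipschitzWith.of_dist_le_mul (fun u w => ?_)⟩
    have := hΦd ξ ξ u w
    rw [dist_eq_norm, dist_eq_norm]
    change _ ≤ ρ * _
    simpa using this
  have hfix : ∀ ξ, Φ ξ ((hcontr ξ).fixedPoint) = (hcontr ξ).fixedPoint :=
    fun ξ => (hcontr ξ).fixedPoint_isFixedPt
  have huniq : ∀ ξ (u : ℝ →ᵇ WithLp 2 (E × F)), (∀ t, Ψ ξ u (min t 0) = u t) →
      u = (hcontr ξ).fixedPoint := by
    intro ξ u hu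
    exact (hcontr ξ).fixedPoint_unique (by
      apply BoundedContinuousFunction.ext
      exact hu)
  refine ⟨fun ξ => (hcontr ξ).fixedPoint, fun ξ t => ?_, huniq, ?_, fun ξ ξ' => ?_⟩
  · rw [← hΦ, hfix]
  · exact (huniq 0 0 (fun t => hΨ0 _)).symm
  · set u := (hcontr ξ).fixedPoint
    set w := (hcontr ξ').fixedPoint
    have hu : Φ ξ u = u := hfix ξ
    have hw : Φ ξ' w = w := hfix ξ'
    have h1 := hΦd ξ ξ' u w
    rw [hu, hw] at h1
    have h2 : ‖u - w‖ ≤ ‖ξ - ξ'‖ / (1 - ρ) := by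
      rw [le_div_iff₀ (by linarith)]; linarith
    have h3 := hS ξ ξ' u w (min 0 0)
    rw [← hΦ, ← hΦ, hu, hw] at h3
    refine h3.trans ?_
    have : L / (b * (1 - ρ)) * ‖ξ - ξ'‖ = L * (‖ξ - ξ'‖ / (1 - ρ)) * (1 / b) := by
      have : 1 - ρ ≠ 0 := by linarith
      field_simp
    rw [this]
    gcongr

/-- Under the gap condition `ρ = L·(1/(η+β) − 1/(α+η)) < 1`, the Lyapunov–Perron map
`N(·, ξ)` has a unique fixed point `v*(·; ξ)` in `C_η⁻` for each `ξ ∈ H_c`, and the map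
`h(ξ) := (v*(0; ξ))_s` satisfies `h(0) = 0` and is Lipschitz with constant
`L/((β+η)(1−ρ))`; its graph is the Lipschitz invariant manifold. -/
theorem stmt_2
    {Hc Hs : Type*}
    [NormedAddCommGroup Hc] [InnerProductSpace ℝ Hc] [CompleteSpace Hc]
    [TopologicalSpace.SeparableSpace Hc]
    [NormedAddCommGroup Hs] [InnerProductSpace ℝ Hs] [CompleteSpace Hs]
    [TopologicalSpace.SeparableSpace Hs]
    (α β η : ℝ) (hα : 0 ≤ α) (hαβ : α < β) (hη1 : -β < η) (hη2 : η < -α)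
    (Sc : ℝ → Hc →L[ℝ] Hc)
    (hSc0 : Sc 0 = ContinuousLinearMap.id ℝ Hc)
    (hScgrp : ∀ s t : ℝ, Sc (s + t) = (Sc s).comp (Sc t))
    (hSccont : ∀ x : Hc, Continuous fun t => Sc t x)
    (hScbnd : ∀ t : ℝ, t ≤ 0 → ∀ x : Hc, ‖Sc t x‖ ≤ Real.exp (-α * t) * ‖x‖)
    (Ss : ℝ → Hs →L[ℝ] Hs)
    (hSs0 : Ss 0 = ContinuousLinearMap.id ℝ Hs)
    (hSsgrp : ∀ s t : ℝ, 0 ≤ s → 0 ≤ t → Ss (s + t) = (Ss s).comp (Ss t))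
    (hSscont : ∀ x : Hs, ContinuousOn (fun t => Ss t x) (Ici 0))
    (hSsbnd : ∀ t : ℝ, 0 ≤ t → ∀ x : Hs, ‖Ss t x‖ ≤ Real.exp (-β * t) * ‖x‖)
    (z : ℝ → ℝ) (hz : Continuous z)
    (L : ℝ) (hL : 0 ≤ L)
    (gc : ℝ → WithLp 2 (Hc × Hs) → Hc)
    (gs : ℝ → WithLp 2 (Hc × Hs) → Hs)
    (hgcCont : Continuous fun p : ℝ × WithLp 2 (Hc × Hs) => gc p.1 p.2)
    (hgsCont : Continuous fun p : ℝ × WithLp 2 (Hc × Hs) => gs p.1 p.2)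
    (hgc0 : ∀ t : ℝ, gc t 0 = 0) (hgs0 : ∀ t : ℝ, gs t 0 = 0)
    (hgcLip : ∀ (t : ℝ) (x y : WithLp 2 (Hc × Hs)), ‖gc t x - gc t y‖ ≤ L * ‖x - y‖)
    (hgsLip : ∀ (t : ℝ) (x y : WithLp 2 (Hc × Hs)), ‖gs t x - gs t y‖ ≤ L * ‖x - y‖)
    (memC : (ℝ → WithLp 2 (Hc × Hs)) → Prop)
    (hmemC : ∀ v, memC v ↔ ContinuousOn v (Iic 0) ∧
      BddAbove ((fun t => Real.exp (-η * t - ∫ s in (0:ℝ)..t, z s) * ‖v t‖) '' Iic 0))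
    (N : (ℝ → WithLp 2 (Hc × Hs)) → Hc → ℝ → WithLp 2 (Hc × Hs))
    (hN : ∀ v ξ t, N v ξ t = (WithLp.equiv 2 (Hc × Hs)).symm
      (Real.exp (∫ s in (0:ℝ)..t, z s) • Sc t ξ +
        ∫ τ in (0:ℝ)..t, Real.exp (∫ s in τ..t, z s) • Sc (t - τ) (gc τ (v τ)),
       ∫ τ in Iic t, Real.exp (∫ s in τ..t, z s) • Ss (t - τ) (gs τ (v τ))))
    -- the gap condition
    (ρ : ℝ) (hρdef : ρ = L * (1 / (η + β) - 1 / (α + η))) (hρ : ρ < 1) :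
    ∃ vstar : Hc → ℝ → WithLp 2 (Hc × Hs),
      -- `vstar ξ` is a fixed point of `N(·, ξ)` in `C_η⁻`
      (∀ ξ : Hc, memC (vstar ξ) ∧ EqOn (N (vstar ξ) ξ) (vstar ξ) (Iic 0)) ∧
      -- and it is the unique such fixed point
      (∀ (ξ : Hc) (v : ℝ → WithLp 2 (Hc × Hs)), memC v →
        EqOn (N v ξ) v (Iic 0) → EqOn v (vstar ξ) (Iic 0)) ∧
      -- the manifold map `h ξ := (vstar ξ 0)_s` vanishes at `0` and is Lipschitz
      ((WithLp.equiv 2 (Hc × Hs)) (vstar 0 0)).2 = 0 ∧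
      (∀ ξ ξ' : Hc,
        ‖((WithLp.equiv 2 (Hc × Hs)) (vstar ξ 0)).2 -
            ((WithLp.equiv 2 (Hc × Hs)) (vstar ξ' 0)).2‖ ≤
          L / ((β + η) * (1 - ρ)) * ‖ξ - ξ'‖) := by
  set Z : ℝ → ℝ := fun t => ∫ s in (0:ℝ)..t, z s with hZ
  have hZc : Continuous Z := intervalIntegral.continuous_primitive
    (fun a b => hz.intervalIntegrable a b) 0
  have hZd : ∀ τ t, ∫ s in τ..t, z s = Z t - Z τ := fun τ t =>
    (intervalIntegral.integral_interval_sub_left (hz.intervalIntegrable _ _)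
      (hz.intervalIntegrable _ _)).symm
  set w : ℝ → ℝ := fun t => Real.exp (-η * t - Z t) with hw
  have hwc : Continuous w := by fun_prop
  have hwp : ∀ t, 0 < w t := fun t => Real.exp_pos _
  have hwn : ∀ t, w t ≠ 0 := fun t => (hwp t).ne'
  have hwi : Continuous fun t => (w t)⁻¹ := hwc.inv₀ hwn
  let A : ℝ → Hc →L[ℝ] Hc := fun t => Real.exp (-η * t) • Sc t
  let B : ℝ → Hs →L[ℝ] Hs := fun t => Real.exp (-η * t) • Ss t
  let Gc : ℝ → WithLp 2 (Hc × Hs) → Hc := fun t x => w t • gc t ((w t)⁻¹ • x)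
  let Gs : ℝ → WithLp 2 (Hc × Hs) → Hs := fun t x => w t • gs t ((w t)⁻¹ • x)
  let Ψ : Hc → (ℝ → WithLp 2 (Hc × Hs)) → ℝ → WithLp 2 (Hc × Hs) := fun ξ u t =>
    WithLp.toLp 2 (A t ξ + ∫ r in (0:ℝ)..t, A r (Gc (t - r) (u (t - r))),
      ∫ r in Ioi 0, B r (Gs (t - r) (u (t - r))))
  have hpair : Continuous fun p : ℝ × WithLp 2 (Hc × Hs) => (p.1, (w p.1)⁻¹ • p.2) := by
    have := hwi.comp (continuous_fst (X := ℝ) (Y := WithLp 2 (Hc × Hs)))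
    exact continuous_fst.prodMk (this.smul continuous_snd)
  have hwf := hwc.comp (continuous_fst (X := ℝ) (Y := WithLp 2 (Hc × Hs)))
  obtain ⟨us, hus1, hus2, hus3, hus4⟩ := aux_core A (-(α + η)) (by linarith)
    (fun x => by
      change Continuous fun t => Real.exp (-η * t) • Sc t x
      exact (by fun_prop : Continuous fun t => Real.exp (-η * t)).smul (hSccont x))
    (fun t ht x => by
      change ‖Real.exp (-η * t) • Sc t x‖ ≤ _
      rw [norm_smul, Real.norm_eq_abs, Real.abs_exp]
      calc _ ≤ Real.exp (-η * t) * (Real.exp (-α * t) * ‖x‖) := by gcongr; exact hScbnd t ht x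
        _ = _ := by rw [← mul_assoc, ← Real.exp_add]; ring_nf)
    B (β + η) (by linarith)
    (fun x => by
      change ContinuousOn (fun t => Real.exp (-η * t) • Ss t x) _
      exact (by fun_prop : Continuous fun t => Real.exp (-η * t)).continuousOn.smul (hSscont x))
    (fun t ht x => by
      change ‖Real.exp (-η * t) • Ss t x‖ ≤ _
      rw [norm_smul, Real.norm_eq_abs, Real.abs_exp]
      calc _ ≤ Real.exp (-η * t) * (Real.exp (-β * t) * ‖x‖) := by gcongr; exact hSsbnd t ht x
        _ = _ := by rw [← mul_assoc, ← Real.exp_add]; ring_nf)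
    L hL Gc Gs
    (hwf.smul (hgcCont.comp hpair)) (hwf.smul (hgsCont.comp hpair))
    (fun t => by simp [Gc, hgc0]) (fun t => by simp [Gs, hgs0])
    (fun t x y => by
      change ‖w t • gc t ((w t)⁻¹ • x) - w t • gc t ((w t)⁻¹ • y)‖ ≤ _
      rw [← smul_sub, norm_smul, Real.norm_eq_abs, abs_of_pos (hwp t)]
      have h := hgcLip t ((w t)⁻¹ • x) ((w t)⁻¹ • y)
      rw [← smul_sub, norm_smul, Real.norm_eq_abs, abs_of_pos (inv_pos.2 (hwp t))] at h
      calc _ ≤ w t * (L * ((w t)⁻¹ * ‖x - y‖)) := by gcongr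
        _ = _ := by field_simp [hwn t])
    (fun t x y => by
      change ‖w t • gs t ((w t)⁻¹ • x) - w t • gs t ((w t)⁻¹ • y)‖ ≤ _
      rw [← smul_sub, norm_smul, Real.norm_eq_abs, abs_of_pos (hwp t)]
      have h := hgsLip t ((w t)⁻¹ • x) ((w t)⁻¹ • y)
      rw [← smul_sub, norm_smul, Real.norm_eq_abs, abs_of_pos (inv_pos.2 (hwp t))] at h
      calc _ ≤ w t * (L * ((w t)⁻¹ * ‖x - y‖)) := by gcongr
        _ = _ := by field_simp [hwn t])
    Ψ (fun _ _ _ => rfl) ρ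
    (by rw [hρdef, add_comm η β, one_div_neg_eq_neg_one_div]; ring) hρ
  -- transfer
  have hwt : ∀ t τ, w t * Real.exp (∫ s in τ..t, z s) = Real.exp (-η * (t - τ)) * w τ := by
    intro t τ
    rw [hZd, hw]
    simp only [← Real.exp_add]
    ring_nf
  have htr : ∀ (u v : ℝ → WithLp 2 (Hc × Hs)), (∀ t ≤ 0, u t = w t • v t) →
      ∀ ξ, ∀ t ≤ 0, w t • N v ξ t = Ψ ξ u t := by
    intro u v huv ξ t ht
    have hvu : ∀ τ ≤ 0, v τ = (w τ)⁻¹ • u τ := fun τ hτ => by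
      rw [huv τ hτ, inv_smul_smul₀ (hwn τ)]
    rw [hN]
    have e1 : ∀ τ ≤ 0, w t • Real.exp (∫ s in τ..t, z s) • Sc (t - τ) (gc τ (v τ)) =
        A (t - τ) (Gc (t - (t - τ)) (u (t - (t - τ)))) := by
      intro τ hτ
      rw [smul_smul, hwt, hvu τ hτ, sub_sub_cancel]
      simp only [A, Gc, _root_.smul_apply, map_smul, smul_smul]
      rw [mul_comm]
    have e2 : ∀ τ ≤ 0, w t • Real.exp (∫ s in τ..t, z s) • Ss (t - τ) (gs τ (v τ)) =
        B (t - τ) (Gs (t - (t - τ)) (u (t - (t - τ)))) := by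
      intro τ hτ
      rw [smul_smul, hwt, hvu τ hτ, sub_sub_cancel]
      simp only [B, Gs, _root_.smul_apply, map_smul, smul_smul]
      rw [mul_comm]
    have c1 : w t • (Real.exp (∫ s in (0:ℝ)..t, z s) • Sc t ξ +
        ∫ τ in (0:ℝ)..t, Real.exp (∫ s in τ..t, z s) • Sc (t - τ) (gc τ (v τ))) =
        A t ξ + ∫ r in (0:ℝ)..t, A r (Gc (t - r) (u (t - r))) := by
      rw [smul_add]
      congr 1
      · rw [smul_smul, hwt]
        simp [A, hw, hZ]
      · rw [← intervalIntegral.integral_smul]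
        have h := intervalIntegral.integral_comp_sub_left (a := 0) (b := t)
          (fun r => A r (Gc (t - r) (u (t - r)))) t
        rw [sub_zero, sub_self] at h
        rw [← h]
        refine intervalIntegral.integral_congr (fun τ hτ => ?_)
        rw [uIcc_of_ge ht] at hτ
        exact e1 τ hτ.2
    have c2 : w t • (∫ τ in Iic t, Real.exp (∫ s in τ..t, z s) • Ss (t - τ) (gs τ (v τ))) =
        ∫ r in Ioi 0, B r (Gs (t - r) (u (t - r))) := by
      rw [← integral_smul, ← integral_Ici_eq_integral_Ioi]
      have h := (Measure.measurePreserving_sub_left (volume : Measure ℝ) t).setIntegral_preimage_emb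
        (MeasurableEquiv.subLeft t).measurableEmbedding
        (fun r => B r (Gs (t - r) (u (t - r)))) (Ici 0)
      rw [← h]
      have hs : (fun x => t - x) ⁻¹' Ici 0 = Iic t := by
        ext x; simp
      rw [hs]
      exact setIntegral_congr_fun measurableSet_Iic (fun τ hτ => e2 τ (le_trans hτ ht))
    change WithLp.toLp 2 (w t • (_ : Hc × Hs)) = WithLp.toLp 2 (_, _)
    rw [← c1, ← c2]
    rfl
  have hw0 : w 0 = 1 := by simp [hw, hZ]
  refine ⟨fun ξ t => (w t)⁻¹ • us ξ t, fun ξ => ⟨?_, ?_⟩, fun ξ v hv hfv => ?_, ?_, fun ξ ξ' => ?_⟩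
  · rw [hmemC]
    refine ⟨(hwi.smul (us ξ).continuous).continuousOn, ‖us ξ‖, ?_⟩
    rintro _ ⟨t, ht, rfl⟩
    change w t * ‖(w t)⁻¹ • us ξ t‖ ≤ _
    rw [norm_smul, Real.norm_eq_abs, abs_of_pos (inv_pos.2 (hwp t)),
      mul_inv_cancel_left₀ (hwn t)]
    exact (us ξ).norm_coe_le_norm t
  · intro t ht
    have h := htr (us ξ) (fun t => (w t)⁻¹ • us ξ t)
      (fun t _ => by rw [smul_inv_smul₀ (hwn t)]) ξ t ht
    have h2 := hus1 ξ t
    rw [min_eq_left (mem_Iic.1 ht)] at h2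
    rw [h2] at h
    change _ = (w t)⁻¹ • us ξ t
    rw [← h, inv_smul_smul₀ (hwn t)]
  · rw [hmemC] at hv
    obtain ⟨hvc, C, hC⟩ := hv
    have hmin : Continuous fun t : ℝ => min t 0 := by fun_prop
    let u : ℝ →ᵇ WithLp 2 (Hc × Hs) := BoundedContinuousFunction.ofNormedAddCommGroup
      (fun t => w (min t 0) • v (min t 0))
      ((hwc.comp hmin).smul (hvc.comp_continuous hmin (fun t => mem_Iic.2 (min_le_right _ _)))) C
      (fun t => by
        rw [norm_smul, Real.norm_eq_abs, abs_of_pos (hwp _)]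
        exact hC ⟨min t 0, mem_Iic.2 (min_le_right _ _), rfl⟩)
    have hu : ∀ t, u t = w (min t 0) • v (min t 0) := fun t => rfl
    have h := hus2 ξ u (fun t => by
      rw [← htr u v (fun t ht => by rw [hu, min_eq_left ht]) ξ _ (min_le_right _ _),
        hfv (mem_Iic.2 (min_le_right _ _)), hu])
    intro t ht
    change _ = (w t)⁻¹ • us ξ t
    rw [← h, hu, min_eq_left (mem_Iic.1 ht), inv_smul_smul₀ (hwn t)]
  · simp [hus3]
  · have h := hus4 ξ ξ'
    simp only [hw0, inv_one, one_smul]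
    exact h
end

section
/- Let ω : ℝ → ℝ be continuous with ω(t)/t → 0 as t → +∞ and as t → −∞ (in particular s ↦ e^s·ω(s) is integrable on (−∞, 0]), and define z_ω(t) = ω(t) − ∫_{−∞}^t e^{s−t}·ω(s) ds. Then (1/t)·∫_0^t z_ω(s) ds → 0 as t → +∞ and as t → −∞. -/
open MeasureTheory Filter

lemma aux_bound (ω : ℝ → ℝ) (hω : Continuous ω)
    (h1 : Tendsto (fun t => ω t / t) atTop (nhds 0))
    (h2 : Tendsto (fun t => ω t / t) atBot (nhds 0)) (ε : ℝ) (hε : 0 < ε) :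
    ∃ C : ℝ, 0 ≤ C ∧ ∀ s, |ω s| ≤ ε * |s| + C := by
  have key : ∀ s : ℝ, s ≠ 0 → dist (ω s / s) 0 < ε → |ω s| ≤ ε * |s| := by
    intro s hs h
    rw [Real.dist_eq, sub_zero, abs_div, div_lt_iff₀ (abs_pos.2 hs)] at h
    exact h.le
  obtain ⟨a, ha⟩ := eventually_atTop.1 (h1 (Metric.ball_mem_nhds 0 hε))
  obtain ⟨b, hb⟩ := eventually_atBot.1 (h2 (Metric.ball_mem_nhds 0 hε))
  obtain ⟨C, hC⟩ := (isCompact_Icc (a := min b (-1)) (b := max a 1)).exists_bound_of_continuousOn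
    hω.continuousOn
  refine ⟨max C 0, le_max_right _ _, fun s => ?_⟩
  have h0 : 0 ≤ ε * |s| := by positivity
  have hm := le_max_right C 0
  have hm' := le_max_left C 0
  by_cases hs : s ∈ Set.Icc (min b (-1)) (max a 1)
  · have := hC s hs
    rw [Real.norm_eq_abs] at this
    linarith
  · rw [Set.mem_Icc, not_and_or, not_le, not_le] at hs
    rcases hs with hs | hs
    · have h3 := lt_min_iff.1 hs
      have := key s (by linarith [h3.2]) (hb s h3.1.le)
      linarith
    · have h3 := max_lt_iff.1 hs
      have := key s (by linarith [h3.2]) (ha s h3.1.le)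
      linarith

lemma aux_int (ω : ℝ → ℝ) (ε C : ℝ) (hε : 0 < ε) (hC : 0 ≤ C)
    (h : ∀ s, |ω s| ≤ ε * |s| + C) (t : ℝ) :
    |∫ s in Set.Iic t, Real.exp (s - t) * ω s| ≤ 2 * (ε * |t| + C + 2 * ε) := by
  have e : ∀ s, Real.exp ((s - t) / 2) = Real.exp (-t / 2) * Real.exp (1 / 2 * s) := by
    intro s
    rw [← Real.exp_add]; congr 1; ring
  have hi : IntegrableOn (fun s => (ε * |t| + C + 2 * ε) * Real.exp ((s - t) / 2)) (Set.Iic t) := by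
    simp only [e]
    exact ((integrableOn_exp_mul_Iic (by norm_num) t).const_mul _).const_mul _
  have hv : ∫ s in Set.Iic t, (ε * |t| + C + 2 * ε) * Real.exp ((s - t) / 2)
      = 2 * (ε * |t| + C + 2 * ε) := by
    simp only [e]
    rw [integral_const_mul, integral_const_mul, integral_exp_mul_Iic (by norm_num)]
    have : Real.exp (-t / 2) * Real.exp (1 / 2 * t) = 1 := by
      rw [← Real.exp_add, Real.exp_eq_one_iff]; ring
    linear_combination 2 * (ε * |t| + C + 2 * ε) * this
  rw [← hv, ← Real.norm_eq_abs]
  refine norm_integral_le_of_norm_le hi ?_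
  filter_upwards [ae_restrict_mem measurableSet_Iic] with s hs
  have hs : s ≤ t := hs
  rw [norm_mul, Real.norm_eq_abs, Real.norm_eq_abs, Real.abs_exp]
  set x := Real.exp ((s - t) / 2) with hx
  have hxx : Real.exp (s - t) = x * x := by
    rw [hx, ← Real.exp_add]; congr 1; ring
  have hx0 : 0 < x := Real.exp_pos _
  have hx1 : x ≤ 1 := Real.exp_le_one_iff.2 (by linarith)
  have hxt : x * (t - s) ≤ 2 := by
    have h4 := Real.add_one_le_exp ((t - s) / 2)
    have h5 : x * Real.exp ((t - s) / 2) = 1 := by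
      rw [hx, ← Real.exp_add, ← Real.exp_zero]; congr 1; ring
    nlinarith
  have habs : |s| ≤ |t| + (t - s) := by
    have := abs_sub_abs_le_abs_sub s t
    rw [abs_sub_comm, abs_of_nonneg (by linarith : 0 ≤ t - s)] at this
    linarith
  have hw : |ω s| ≤ ε * |t| + C + ε * (t - s) := by
    have := mul_le_mul_of_nonneg_left habs hε.le
    linarith [h s]
  rw [hxx]
  have hK : 0 ≤ ε * |t| + C := by positivity
  have : x * |ω s| ≤ ε * |t| + C + 2 * ε := by
    have a1 := mul_le_mul_of_nonneg_left hw hx0.le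
    have a2 := mul_le_mul_of_nonneg_left hxt hε.le
    have a3 := mul_le_mul_of_nonneg_right hx1 hK
    nlinarith
  nlinarith

lemma aux_lim (A : ℝ → ℝ) (hA : ∀ ε : ℝ, 0 < ε → ∃ C : ℝ, ∀ t, |A t| ≤ ε * |t| + C)
    (l : Filter ℝ) (hl : Tendsto (fun t : ℝ => |t|) l atTop) :
    Tendsto (fun t => (1 / t) * (A t - A 0)) l (nhds 0) := by
  rw [Metric.tendsto_nhds]
  intro ε hε
  obtain ⟨C, hC⟩ := hA (ε / 2) (by linarith)
  filter_upwards [hl.eventually_gt_atTop 0, hl.eventually_gt_atTop (2 * (C + |A 0|) / ε)]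
    with t h0 h1
  rw [div_lt_iff₀ hε] at h1
  rw [Real.dist_eq, sub_zero, abs_mul, abs_div, abs_one, one_div_mul_eq_div, div_lt_iff₀ h0]
  have := abs_sub (A t) (A 0)
  have := hC t
  linarith

/-- The Cesàro mean of the stationary Ornstein–Uhlenbeck process `z_ω` along the
orbit vanishes at `±∞` when the driving path `ω` has sublinear growth. -/
theorem stmt_8 (ω : ℝ → ℝ) (hω : Continuous ω)
    (hsub_top : Tendsto (fun t => ω t / t) atTop (nhds 0))
    (hsub_bot : Tendsto (fun t => ω t / t) atBot (nhds 0))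
    (hint : IntegrableOn (fun s => Real.exp s * ω s) (Set.Iic 0))
    (zω : ℝ → ℝ)
    (hzω : ∀ t, zω t = ω t - ∫ s in Set.Iic t, Real.exp (s - t) * ω s) :
    Tendsto (fun t => (1 / t) * ∫ s in (0:ℝ)..t, zω s) atTop (nhds 0) ∧
    Tendsto (fun t => (1 / t) * ∫ s in (0:ℝ)..t, zω s) atBot (nhds 0) := by
  set A : ℝ → ℝ := fun t => ∫ s in Set.Iic t, Real.exp (s - t) * ω s with hA
  have hc : Continuous (fun s => Real.exp s * ω s) := by fun_prop
  have hI : ∀ t, IntegrableOn (fun s => Real.exp s * ω s) (Set.Iic t) := by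
    intro t
    refine (hint.union (hc.integrableOn_Icc (a := 0) (b := t))).mono_set ?_
    intro s hs
    rcases le_total s 0 with h | h
    · exact Or.inl h
    · exact Or.inr ⟨h, hs⟩
  have hA' : A = fun t => Real.exp (-t) *
      ((∫ s in Set.Iic 0, Real.exp s * ω s) + ∫ s in (0:ℝ)..t, Real.exp s * ω s) := by
    funext t
    rw [← intervalIntegral.integral_Iic_sub_Iic (hI 0) (hI t), add_sub_cancel,
      ← integral_const_mul]
    simp only [hA]
    congr 1
    funext s
    rw [← mul_assoc, ← Real.exp_add]
    congr 2; ring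
  have hd : ∀ t, HasDerivAt A (zω t) t := by
    intro t
    have h1 : HasDerivAt (fun t => ∫ s in (0:ℝ)..t, Real.exp s * ω s) (Real.exp t * ω t) t :=
      hc.integral_hasStrictDerivAt 0 t |>.hasDerivAt
    have h2 : HasDerivAt (fun t : ℝ => Real.exp (-t)) (Real.exp (-t) * (-1)) t :=
      (hasDerivAt_neg t).exp
    have h3 := h2.mul (h1.const_add (∫ s in Set.Iic 0, Real.exp s * ω s))
    have hz : zω t = ω t - A t := hzω t
    rw [hz, hA']
    refine h3.congr_deriv ?_
    have : Real.exp (-t) * Real.exp t = 1 := by rw [← Real.exp_add]; simp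
    linear_combination ω t * this
  have hAc : Continuous A := continuous_iff_continuousAt.2 fun t => (hd t).continuousAt
  have hzc : Continuous zω := by
    have : zω = fun t => ω t - A t := funext hzω
    rw [this]; exact hω.sub hAc
  have hF : ∀ t, ∫ s in (0:ℝ)..t, zω s = A t - A 0 := fun t =>
    intervalIntegral.integral_eq_sub_of_hasDerivAt (fun x _ => hd x) (hzc.intervalIntegrable _ _)
  have hB : ∀ ε : ℝ, 0 < ε → ∃ C : ℝ, ∀ t, |A t| ≤ ε * |t| + C := by
    intro ε hε
    obtain ⟨C, hC0, hC⟩ := aux_bound ω hω hsub_top hsub_bot (ε / 2) (by linarith)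
    refine ⟨2 * C + 2 * ε, fun t => ?_⟩
    have := aux_int ω (ε / 2) C (by linarith) hC0 hC t
    simp only [hA]
    linarith
  simp only [hF]
  exact ⟨aux_lim A hB _ tendsto_abs_atTop_atTop, aux_lim A hB _ tendsto_abs_atBot_atTop⟩
end
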